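/- Let g : ℝ^d × ℝ^p → ℝ be differentiable with ∇_x g and ∇_y g each L_g-Lipschitz in each variable, and suppose that for every x: g(x,·) attains its minimum G(x) at y*(x), the μ-PL condition ‖∇_y g(x, y)‖² ≥ 2μ (g(x, y) − G(x)) and the quadratic growth condition g(x, y) − G(x) ≥ (μ/2) ‖y − y*(x)‖² hold for all y (μ > 0 with μ ≤ L_g), G is differentiable with ∇G(x) = ∇_x g(x, y*(x)), and ∇G is L_G-Lipschitz with L_G ≥ max{L_g, L_g²/(2μ)}. Let (x_t, y_t, v_t, B_t) satisfy y_{t+1} = y_t − λ B_t^{-1} v_t where B_t ∈ ℝ^{p×p} is symmetric with ρ_l I_p ⪯ B_t ⪯ ρ_u I_p, ρ_l ρ_u ≥ 1, 0 < ρ_l ≤ 1, and x_{t+1} ∈ ℝ^d is arbitrary. If 0 < γ ≤ min{ λμρ_l/(16 L_G ρ_u), μρ_l/(16 L_g² ρ_u) } and 0 < λ ≤ 1/(2 L_g ρ_u), then g(x_{t+1}, y_{t+1}) − G(x_{t+1}) ≤ (1 − λμ/(2ρ_u)) (g(x_t, y_t) − G(x_t)) + (ρ_l/(8γ)) ‖x_{t+1}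 − x_t‖² − (1/(4λρ_u)) ‖y_{t+1} − y_t‖² + (λ/ρ_l) ‖∇_y g(x_t, y_t) − v_t‖². -/

import Mathlib

open scoped RealInnerProductSpace


lemma descent_aux {n : ℕ} (f : EuclideanSpace ℝ (Fin n) → ℝ)
    (f' : EuclideanSpace ℝ (Fin n) → EuclideanSpace ℝ (Fin n)) (L : ℝ)
    (hf : ∀ x, HasGradientAt f (f' x) x)
    (hL : ∀ x₁ x₂, ‖f' x₁ - f' x₂‖ ≤ L * ‖x₁ - x₂‖)
    (a b : EuclideanSpace ℝ (Fin n)) :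
    f b ≤ f a + ⟪f' a, b - a⟫ + L / 2 * ‖b - a‖ ^ 2 := by
  have hline : ∀ t : ℝ, HasDerivAt (fun t : ℝ => a + t • (b - a)) (b - a) t := by
    intro t
    simpa using ((hasDerivAt_id t).smul_const (b - a)).const_add a
  have hd : ∀ t : ℝ, HasDerivAt
      (fun t : ℝ => f (a + t • (b - a)) - t * ⟪f' a, b - a⟫ - t ^ 2 * (L / 2 * ‖b - a‖ ^ 2))
      (⟪f' (a + t • (b - a)), b - a⟫ - ⟪f' a, b - a⟫ - 2 * t * (L / 2 * ‖b - a‖ ^ 2)) t := by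
    intro t
    have h1 := (hf (a + t • (b - a))).hasFDerivAt.comp_hasDerivAt t (hline t)
    have h2 := (hasDerivAt_id t).mul_const ⟪f' a, b - a⟫
    have h3 := (hasDerivAt_pow 2 t).mul_const (L / 2 * ‖b - a‖ ^ 2)
    have h4 := (h1.sub h2).sub h3
    exact h4.congr_deriv (by simp)
  have hanti := antitoneOn_of_deriv_nonpos (convex_Icc (0 : ℝ) 1)
    (fun t _ => (hd t).continuousAt.continuousWithinAt)
    (fun t _ => (hd t).differentiableAt.differentiableWithinAt)
    (by
      intro t ht
      rw [interior_Icc] at ht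
      rw [(hd t).deriv, ← inner_sub_left]
      have h1 := real_inner_le_norm (f' (a + t • (b - a)) - f' a) (b - a)
      have h2 := hL (a + t • (b - a)) a
      have h3 : ‖a + t • (b - a) - a‖ = t * ‖b - a‖ := by
        rw [add_sub_cancel_left, norm_smul, Real.norm_of_nonneg ht.1.le]
      rw [h3] at h2
      have h4 := mul_le_mul_of_nonneg_right h2 (norm_nonneg (b - a))
      linarith)
  have h := hanti (Set.left_mem_Icc.2 zero_le_one) (Set.right_mem_Icc.2 zero_le_one) zero_le_one
  simp at h
  linarith

lemma grad_sub_aux {n : ℕ} (f h : EuclideanSpace ℝ (Fin n) → ℝ)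
    (a b x : EuclideanSpace ℝ (Fin n))
    (hf : HasGradientAt f a x) (hh : HasGradientAt h b x) :
    HasGradientAt (fun x' => f x' - h x') (a - b) x := by
  rw [hasGradientAt_iff_hasFDerivAt, map_sub]
  exact hf.hasFDerivAt.sub hh.hasFDerivAt

lemma op_aux {p : ℕ} (B : EuclideanSpace ℝ (Fin p) →L[ℝ] EuclideanSpace ℝ (Fin p)) (ρl ρu : ℝ)
    (hs : ∀ v' w', ⟪B v', w'⟫ = ⟪v', B w'⟫)
    (hl : ∀ v', ρl * ‖v'‖ ^ 2 ≤ ⟪B v', v'⟫)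
    (hu : ∀ v', ⟪B v', v'⟫ ≤ ρu * ‖v'‖ ^ 2)
    (hρl : 0 < ρl) (hρu : 0 < ρu) (e z : EuclideanSpace ℝ (Fin p)) :
    ‖e + B z‖ ^ 2 / ρu ≤ ⟪B z, z⟫ + 2 * ⟪e, z⟫ + ‖e‖ ^ 2 / ρl := by
  have hinj : Function.Injective (B : EuclideanSpace ℝ (Fin p) →ₗ[ℝ] EuclideanSpace ℝ (Fin p)) := by
    rw [injective_iff_map_eq_zero]
    intro w hw
    have hw' : B w = 0 := hw
    have h := hl w
    rw [hw', inner_zero_left] at h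
    have : ‖w‖ ^ 2 = 0 := by nlinarith [sq_nonneg ‖w‖]
    simpa using this
  obtain ⟨w, hw⟩ := (LinearMap.injective_iff_surjective.1 hinj) e
  have hw' : B w = e := hw
  subst hw'
  have hB1 : ∀ q, ‖B q‖ ^ 2 / ρu ≤ ⟪B q, q⟫ := by
    intro q
    have h1 := hl (q - ρu⁻¹ • B q)
    have h0 : 0 ≤ ρl * ‖q - ρu⁻¹ • B q‖ ^ 2 := by positivity
    have h2 := hu (B q)
    have h3 : ⟪B (B q), q⟫ = ‖B q‖ ^ 2 := by rw [hs, real_inner_self_eq_norm_sq]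
    simp only [map_sub, map_smul, inner_sub_left, inner_sub_right, inner_smul_left,
      inner_smul_right, h3, real_inner_self_eq_norm_sq] at h1
    simp at h1
    have h4 : ρu⁻¹ * (ρu⁻¹ * ⟪B (B q), B q⟫) ≤ ρu⁻¹ * (ρu⁻¹ * (ρu * ‖B q‖ ^ 2)) := by gcongr
    have h5 : ρu⁻¹ * (ρu⁻¹ * (ρu * ‖B q‖ ^ 2)) = ρu⁻¹ * ‖B q‖ ^ 2 := by field_simp
    rw [div_eq_inv_mul]
    linarith
  have hB2 : ⟪B w, w⟫ ≤ ‖B w‖ ^ 2 / ρl := by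
    have h1 := hl w
    have h2 := real_inner_le_norm (B w) w
    rw [le_div_iff₀ hρl]
    by_cases h0 : ‖w‖ = 0
    · rw [h0] at h2
      nlinarith [sq_nonneg ‖B w‖]
    · have hpos : 0 < ‖w‖ := lt_of_le_of_ne (norm_nonneg _) (Ne.symm h0)
      have h3 : ρl * ‖w‖ ≤ ‖B w‖ := by
        by_contra hc
        push Not at hc
        nlinarith
      nlinarith [norm_nonneg (B w)]
  have h := hB1 (w + z)
  have h3 : ⟪B z, w⟫ = ⟪B w, z⟫ := by rw [hs, real_inner_comm]
  rw [map_add, inner_add_left, inner_add_right, inner_add_right, h3] at h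
  linarith

set_option maxHeartbeats 1000000 in
/-- (Lemma 4 of the paper.) Descent of the lower-level residual along the
iterates: under the PL/quadratic-growth/smoothness assumptions on `g` and its value
function `G`, the adaptive update `y_{t+1} = y_t − λ B_t⁻¹ v_t` (encoded as
`B_t (y_t − y_{t+1}) = λ v_t`) with `ρ_l I ⪯ B_t ⪯ ρ_u I`, `ρ_l ρ_u ≥ 1`, `0 < ρ_l ≤ 1`,
and step sizes `γ ≤ min{λμρ_l/(16L_Gρ_u), μρ_l/(16L_g²ρ_u)}`, `λ ≤ 1/(2L_gρ_u)` satisfies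
the stated recursive inequality. -/
theorem stmt_12 {d p : ℕ} (μ Lg LG lam γ ρl ρu : ℝ)
    (hμ : 0 < μ) (hμLg : μ ≤ Lg)
    (hLG : max Lg (Lg ^ 2 / (2 * μ)) ≤ LG)
    (g : EuclideanSpace ℝ (Fin d) → EuclideanSpace ℝ (Fin p) → ℝ)
    (gx : EuclideanSpace ℝ (Fin d) → EuclideanSpace ℝ (Fin p) → EuclideanSpace ℝ (Fin d))
    (gy : EuclideanSpace ℝ (Fin d) → EuclideanSpace ℝ (Fin p) → EuclideanSpace ℝ (Fin p))
    (hgx : ∀ x y, HasGradientAt (fun x' => g x' y) (gx x y) x)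
    (hgy : ∀ x y, HasGradientAt (fun y' => g x y') (gy x y) y)
    (hgxlipy : ∀ x y₁ y₂, ‖gx x y₁ - gx x y₂‖ ≤ Lg * ‖y₁ - y₂‖)
    (hgxlipx : ∀ x₁ x₂ y, ‖gx x₁ y - gx x₂ y‖ ≤ Lg * ‖x₁ - x₂‖)
    (hgylipy : ∀ x y₁ y₂, ‖gy x y₁ - gy x y₂‖ ≤ Lg * ‖y₁ - y₂‖)
    (hgylipx : ∀ x₁ x₂ y, ‖gy x₁ y - gy x₂ y‖ ≤ Lg * ‖x₁ - x₂‖)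
    (G : EuclideanSpace ℝ (Fin d) → ℝ)
    (ystar : EuclideanSpace ℝ (Fin d) → EuclideanSpace ℝ (Fin p))
    (hGval : ∀ x, g x (ystar x) = G x) (hGlow : ∀ x y, G x ≤ g x y)
    (hPL : ∀ x y, ‖gy x y‖ ^ 2 ≥ 2 * μ * (g x y - G x))
    (hQG : ∀ x y, g x y - G x ≥ (μ / 2) * ‖y - ystar x‖ ^ 2)
    (hGgrad : ∀ x, HasGradientAt G (gx x (ystar x)) x)
    (hGlip : ∀ x₁ x₂, ‖gx x₁ (ystar x₁) - gx x₂ (ystar x₂)‖ ≤ LG * ‖x₁ - x₂‖)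
    (x : ℕ → EuclideanSpace ℝ (Fin d)) (y : ℕ → EuclideanSpace ℝ (Fin p))
    (v : ℕ → EuclideanSpace ℝ (Fin p))
    (B : ℕ → (EuclideanSpace ℝ (Fin p) →L[ℝ] EuclideanSpace ℝ (Fin p)))
    (hBsymm : ∀ t v' w', ⟪B t v', w'⟫ = ⟪v', B t w'⟫)
    (hBl : ∀ t v', ρl * ‖v'‖ ^ 2 ≤ ⟪B t v', v'⟫)
    (hBu : ∀ t v', ⟪B t v', v'⟫ ≤ ρu * ‖v'‖ ^ 2)
    (hρl : 0 < ρl) (hρl1 : ρl ≤ 1) (hρu : 0 < ρu) (hρlu : 1 ≤ ρl * ρu)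
    (hupd : ∀ t, B t (y t - y (t + 1)) = lam • v t)
    (hγ : 0 < γ)
    (hγle : γ ≤ min (lam * μ * ρl / (16 * LG * ρu)) (μ * ρl / (16 * Lg ^ 2 * ρu)))
    (hlam : 0 < lam) (hlamle : lam ≤ 1 / (2 * Lg * ρu)) :
    ∀ t, g (x (t + 1)) (y (t + 1)) - G (x (t + 1))
      ≤ (1 - lam * μ / (2 * ρu)) * (g (x t) (y t) - G (x t))
        + (ρl / (8 * γ)) * ‖x (t + 1) - x t‖ ^ 2
        - (1 / (4 * lam * ρu)) * ‖y (t + 1) - y t‖ ^ 2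
        + (lam / ρl) * ‖gy (x t) (y t) - v t‖ ^ 2 := by
  intro t
  have hLgpos : 0 < Lg := lt_of_lt_of_le hμ hμLg
  have hLG1 : Lg ≤ LG := (le_max_left _ _).trans hLG
  have hLG2 : Lg ^ 2 / (2 * μ) ≤ LG := (le_max_right _ _).trans hLG
  have hLGpos : 0 < LG := by linarith
  have hρu1 : 1 ≤ ρu := by nlinarith
  have hlamle' : lam * (2 * Lg * ρu) ≤ 1 := by
    rwa [le_div_iff₀ (by positivity)] at hlamle
  have hγ1 : γ * (16 * LG * ρu) ≤ lam * μ * ρl := by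
    have := hγle.trans (min_le_left _ _)
    rwa [le_div_iff₀ (by positivity)] at this
  -- y step
  have hdy := descent_aux (fun y' => g (x t) y') (gy (x t)) Lg
    (fun y' => hgy (x t) y') (hgylipy (x t)) (y t) (y (t + 1))
  have hdx := descent_aux (fun x' => g x' (y (t + 1)) - G x')
    (fun x' => gx x' (y (t + 1)) - gx x' (ystar x')) (Lg + LG)
    (fun x' => grad_sub_aux _ _ _ _ _ (hgx x' (y (t + 1))) (hGgrad x'))
    (fun x₁ x₂ => by
      have h1 := hgxlipx x₁ x₂ (y (t + 1))
      have h2 := hGlip x₁ x₂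
      have h3 := norm_sub_le (gx x₁ (y (t + 1)) - gx x₂ (y (t + 1)))
        (gx x₁ (ystar x₁) - gx x₂ (ystar x₂))
      have h4 : gx x₁ (y (t + 1)) - gx x₁ (ystar x₁) - (gx x₂ (y (t + 1)) - gx x₂ (ystar x₂))
        = gx x₁ (y (t + 1)) - gx x₂ (y (t + 1)) - (gx x₁ (ystar x₁) - gx x₂ (ystar x₂)) := by
        abel
      rw [h4]
      linarith) (x t) (x (t + 1))
  have hop := op_aux (B t) ρl ρu (hBsymm t) (hBl t) (hBu t) hρl hρu
    (gy (x t) (y t) - v t) (lam⁻¹ • (y t - y (t + 1)))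
  have hBz : B t (lam⁻¹ • (y t - y (t + 1))) = v t := by
    rw [map_smul, hupd, smul_smul, inv_mul_cancel₀ hlam.ne', one_smul]
  rw [hBz, sub_add_cancel] at hop
  have hvl : ρl * ‖y (t + 1) - y t‖ ^ 2 ≤ lam * ⟪v t, y t - y (t + 1)⟫ := by
    have h := hBl t (y t - y (t + 1))
    rwa [hupd, real_inner_smul_left, norm_sub_rev] at h
  rw [real_inner_smul_right, real_inner_smul_right, inner_sub_left] at hop
  have hgys : ⟪gy (x t) (y t), y (t + 1) - y t⟫ = - ⟪gy (x t) (y t), y t - y (t + 1)⟫ := by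
    rw [← inner_neg_right, neg_sub]
  rw [hgys] at hdy
  have hPLt := hPL (x t) (y t)
  have hQGt := hQG (x t) (y (t + 1))
  have hcross : ⟪gx (x t) (y (t + 1)) - gx (x t) (ystar (x t)), x (t + 1) - x t⟫
      ≤ Lg * ‖y (t + 1) - ystar (x t)‖ * ‖x (t + 1) - x t‖ :=
    (real_inner_le_norm _ _).trans
      (mul_le_mul_of_nonneg_right (hgxlipy _ _ _) (norm_nonneg _))
  have ha0 : 0 ≤ g (x t) (y t) - G (x t) := sub_nonneg.2 (hGlow _ _)
  beta_reduce at hdx hdy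
  set a := g (x t) (y t) - G (x t) with ha
  set a1 := g (x t) (y (t + 1)) - G (x t) with ha1
  set D := ‖x (t + 1) - x t‖
  set S := ‖y (t + 1) - y t‖
  set E := ‖gy (x t) (y t) - v t‖
  set r := ‖y (t + 1) - ystar (x t)‖
  set N := ‖gy (x t) (y t)‖
  set P := ⟪gy (x t) (y t), y t - y (t + 1)⟫
  set Q := ⟪v t, y t - y (t + 1)⟫
  obtain ⟨u, hu⟩ : ∃ u, u = lam * μ / ρu := ⟨_, rfl⟩
  have hu0 : 0 < u := by rw [hu]; positivity
  have hu1 : u ≤ 1 / 2 := by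
    rw [hu, div_le_iff₀ hρu]
    have : lam * μ ≤ lam * Lg := by gcongr
    have : lam * Lg ≤ lam * Lg * ρu := le_mul_of_one_le_right (by positivity) hρu1
    linarith
  -- the y step inequality
  have hstep1 : a1 ≤ (1 - u) * a - 1 / (4 * lam * ρu) * S ^ 2 + lam / (2 * ρl) * E ^ 2 := by
    have h1 : u * a ≤ lam / 2 * (N ^ 2 / ρu) := by
      have : lam / 2 * (N ^ 2 / ρu) - u * a = lam / (2 * ρu) * (N ^ 2 - 2 * μ * a) := by
        rw [hu]; field_simp
      have h2 : 0 ≤ lam / (2 * ρu) * (N ^ 2 - 2 * μ * a) :=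
        mul_nonneg (by positivity) (by linarith)
      linarith
    have h2 : lam / 2 * (N ^ 2 / ρu) ≤ P - Q / 2 + lam / (2 * ρl) * E ^ 2 := by
      have h := mul_le_mul_of_nonneg_left hop (by positivity : 0 ≤ lam / 2)
      refine h.trans (le_of_eq ?_)
      field_simp
      ring
    have h3 : 1 / (4 * lam * ρu) * S ^ 2 + Lg / 2 * S ^ 2 ≤ Q / 2 := by
      have h4 : Lg ≤ 1 / (2 * lam * ρu) := by
        rw [le_div_iff₀ (by positivity)]; linarith
      have h5 : Lg / 2 * S ^ 2 ≤ 1 / (2 * lam * ρu) / 2 * S ^ 2 := by gcongr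
      have h6 : 1 / (lam * ρu) * S ^ 2 ≤ Q := by
        have : S ^ 2 ≤ lam * ρu * Q := by
          have := mul_le_mul_of_nonneg_left hvl hρu.le
          have h8 := mul_le_mul_of_nonneg_right hρlu (sq_nonneg S)
          linarith
        rw [one_div_mul_eq_div, div_le_iff₀ (by positivity)]
        linarith
      have h7 : 1 / (4 * lam * ρu) * S ^ 2 + 1 / (2 * lam * ρu) / 2 * S ^ 2
        = 1 / (lam * ρu) * S ^ 2 / 2 := by field_simp; ring
      linarith
    linarith
  -- the x step
  obtain ⟨ε, hε⟩ : ∃ ε, ε = u / (2 * (1 - u)) := ⟨_, rfl⟩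
  have h1u : 0 < 1 - u := by linarith
  have hε0 : 0 < ε := by rw [hε]; positivity
  have hεu : 2 * ε * (1 - u) = u := by rw [hε]; field_simp
  have hε1 : ε ≤ 1 := by
    rw [hε, div_le_iff₀ (by positivity)]; linarith
  have hyoung : Lg * r * D ≤ ε * a1 + Lg ^ 2 / (2 * μ * ε) * D ^ 2 := by
    have h1 : ε * (μ / 2 * r ^ 2) ≤ ε * a1 := by gcongr
    have h2 : ε * (μ / 2 * r ^ 2) + Lg ^ 2 / (2 * μ * ε) * D ^ 2 - Lg * r * D
      = (ε * μ * r - Lg * D) ^ 2 / (2 * μ * ε) := by field_simp; ring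
    have h3 : 0 ≤ (ε * μ * r - Lg * D) ^ 2 / (2 * μ * ε) := by positivity
    linarith
  have hcoef : Lg ^ 2 / (2 * μ * ε) + (Lg + LG) / 2 ≤ ρl / (8 * γ) := by
    have h1 : Lg ^ 2 / (2 * μ * ε) ≤ LG / ε := by
      rw [← div_div]; gcongr
    have h2 : LG / ε = 2 * LG / u - 2 * LG := by
      rw [hε]; field_simp
    have h3 : 2 * LG / u ≤ ρl / (8 * γ) := by
      rw [hu, div_div_eq_mul_div, div_le_div_iff₀ (by positivity) (by positivity)]
      linarith
    linarith
  have hx : g (x (t + 1)) (y (t + 1)) - G (x (t + 1)) ≤ (1 + ε) * a1 + ρl / (8 * γ) * D ^ 2 := by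
    have := mul_le_mul_of_nonneg_right hcoef (sq_nonneg D)
    linarith
  have hm := mul_le_mul_of_nonneg_left hstep1 (by positivity : 0 ≤ 1 + ε)
  have hua : lam * μ / (2 * ρu) = u / 2 := by rw [hu]; field_simp
  rw [hua]
  have hA : (1 + ε) * ((1 - u) * a) = (1 - u / 2) * a := by
    linear_combination (a / 2) * hεu
  have hSS : 0 ≤ ε * (1 / (4 * lam * ρu) * S ^ 2) := by positivity
  have hEE : (1 + ε) * (lam / (2 * ρl) * E ^ 2) ≤ lam / ρl * E ^ 2 := by
    have h1 : lam / ρl * E ^ 2 = 2 * (lam / (2 * ρl) * E ^ 2) := by field_simp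
    rw [h1]
    gcongr
    linarith
  linarith
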